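/- arXiv:2408.04030 — 3 statements merged into one kernel-verified Lean document; each statement's English description precedes it below -/
import Mathlib

section
/- Let z₀, w₀ ∈ 𝔻 with |w₀| < |z₀|, and set u₀ := w₀/z₀. Let f ∈ ℋ satisfy f(0) = 0 and f(z₀) = w₀. Then there exists f* ∈ 𝒮 such that f(z) = z·T_{u₀}(T_{−z₀}(z)·f*(z)) for all z ∈ 𝔻. -/
open Complex Metric

/-- `ℋ`: analytic self-maps of the open unit disk. -/
def Hclass (f : ℂ → ℂ) : Prop :=
  DifferentiableOn ℂ f (ball (0 : ℂ) 1) ∧ Set.MapsTo f (ball (0 : ℂ) 1) (ball (0 : ℂ) 1)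

/-- `𝒮`: analytic maps of the open unit disk into the closed unit disk. -/
def Sclass (f : ℂ → ℂ) : Prop :=
  DifferentiableOn ℂ f (ball (0 : ℂ) 1) ∧ Set.MapsTo f (ball (0 : ℂ) 1) (closedBall (0 : ℂ) 1)

/-- The Möbius transformation `T_a(z) = (z + a)/(1 + conj(a) z)`. -/
noncomputable def T (a z : ℂ) : ℂ := (z + a) / (1 + (starRingEnd ℂ) a * z)

/-!
A function of class `𝒮` vanishing at `a` is divisible in `𝒮` by the automorphism `T (-a)`: this is
the Schwarz lemma transported from `0` to `a`. Dividing `f` at `0` gives `g ∈ 𝒮` with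
`f z = z * g z` and `g z₀ = u₀`. Then `T (-u₀) ∘ g` vanishes at `z₀`; dividing it there gives `f*`,
and applying `T u₀`, the inverse of `T (-u₀)`, recovers `g`.
-/

section Moebius

variable {a z : ℂ}

lemma one_add_conj_mul_ne_zero (ha : ‖a‖ < 1) (hz : ‖z‖ ≤ 1) :
    1 + (starRingEnd ℂ) a * z ≠ 0 := by
  intro h
  have hnorm : ‖a‖ * ‖z‖ = 1 := by
    simpa using congrArg norm (eq_neg_of_add_eq_zero_right h)
  have hprod : ‖a‖ * ‖z‖ < 1 := mul_lt_one_of_nonneg_of_lt_one_left (norm_nonneg a) ha hz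
  exact hprod.ne hnorm

lemma one_sub_norm_T_sq (ha : ‖a‖ < 1) (hz : ‖z‖ ≤ 1) :
    1 - ‖T a z‖ ^ 2 =
      (1 - ‖a‖ ^ 2) * (1 - ‖z‖ ^ 2) / ‖1 + (starRingEnd ℂ) a * z‖ ^ 2 := by
  have hden : ‖1 + (starRingEnd ℂ) a * z‖ ^ 2 ≠ 0 :=
    pow_ne_zero 2 (norm_ne_zero_iff.mpr (one_add_conj_mul_ne_zero ha hz))
  have hnum : ‖1 + (starRingEnd ℂ) a * z‖ ^ 2 - ‖z + a‖ ^ 2 =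
      (1 - ‖a‖ ^ 2) * (1 - ‖z‖ ^ 2) := by
    simp only [← normSq_eq_norm_sq, normSq_apply, add_re, add_im, mul_re, mul_im, one_re, one_im,
      conj_re, conj_im]
    ring
  rw [T, norm_div, div_pow, one_sub_div hden, hnum]

lemma norm_T_le_one (ha : ‖a‖ < 1) (hz : ‖z‖ ≤ 1) : ‖T a z‖ ≤ 1 := by
  have ha_sq : 0 ≤ 1 - ‖a‖ ^ 2 := sub_nonneg.mpr (pow_le_one₀ (norm_nonneg a) ha.le)
  have hz_sq : 0 ≤ 1 - ‖z‖ ^ 2 := sub_nonneg.mpr (pow_le_one₀ (norm_nonneg z) hz)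
  have hT : 0 ≤ 1 - ‖T a z‖ ^ 2 := by
    rw [one_sub_norm_T_sq ha hz]
    positivity
  exact (sq_le_one_iff₀ (norm_nonneg _)).mp (sub_nonneg.mp hT)

lemma norm_T_lt_one (ha : ‖a‖ < 1) (hz : ‖z‖ < 1) : ‖T a z‖ < 1 := by
  have ha_sq : 0 < 1 - ‖a‖ ^ 2 := sub_pos.mpr (pow_lt_one₀ (norm_nonneg a) ha two_ne_zero)
  have hz_sq : 0 < 1 - ‖z‖ ^ 2 := sub_pos.mpr (pow_lt_one₀ (norm_nonneg z) hz two_ne_zero)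
  have hden := one_add_conj_mul_ne_zero ha hz.le
  have hT : 0 < 1 - ‖T a z‖ ^ 2 := by
    rw [one_sub_norm_T_sq ha hz.le]
    positivity
  exact (sq_lt_one_iff₀ (norm_nonneg _)).mp (sub_pos.mp hT)

lemma mapsTo_T_closedBall (ha : ‖a‖ < 1) : Set.MapsTo (T a) (closedBall 0 1) (closedBall 0 1) :=
  fun _ hz ↦ mem_closedBall_zero_iff.mpr (norm_T_le_one ha (mem_closedBall_zero_iff.mp hz))

lemma mapsTo_T_ball (ha : ‖a‖ < 1) : Set.MapsTo (T a) (ball 0 1) (ball 0 1) :=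
  fun _ hz ↦ mem_ball_zero_iff.mpr (norm_T_lt_one ha (mem_ball_zero_iff.mp hz))

lemma differentiableOn_T (ha : ‖a‖ < 1) : DifferentiableOn ℂ (T a) (closedBall 0 1) := by
  refine DifferentiableOn.div (by fun_prop) (by fun_prop) fun z hz ↦ ?_
  exact one_add_conj_mul_ne_zero ha (mem_closedBall_zero_iff.mp hz)

lemma T_zero_right (a : ℂ) : T a 0 = a := by simp [T]

lemma T_zero_left (z : ℂ) : T 0 z = z := by simp [T]

lemma T_neg_self (a : ℂ) : T (-a) a = 0 := by simp [T]

lemma T_T_neg (ha : ‖a‖ < 1) (hz : ‖z‖ ≤ 1) : T a (T (-a) z) = z := by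
  have hna : ‖-a‖ < 1 := by rwa [norm_neg]
  have hden : 1 - (starRingEnd ℂ) a * z ≠ 0 := by
    simpa [sub_eq_add_neg] using one_add_conj_mul_ne_zero hna hz
  have hden' : 1 + (starRingEnd ℂ) a * T (-a) z ≠ 0 :=
    one_add_conj_mul_ne_zero ha (norm_T_le_one hna hz)
  have hmul : T (-a) z * (1 - (starRingEnd ℂ) a * z) = z - a := by
    simp only [T, map_neg, neg_mul, ← sub_eq_add_neg, div_mul_cancel₀ _ hden]
  rw [T, div_eq_iff hden']
  apply mul_right_cancel₀ hden
  linear_combination (1 - z * (starRingEnd ℂ) a) * hmul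

end Moebius

namespace Sclass

variable {g : ℂ → ℂ} {a : ℂ}

lemma T_comp (hg : Sclass g) (ha : ‖a‖ < 1) : Sclass (T a ∘ g) :=
  ⟨(differentiableOn_T ha).comp hg.1 hg.2, (mapsTo_T_closedBall ha).comp hg.2⟩

lemma comp_T (hg : Sclass g) (ha : ‖a‖ < 1) : Sclass (g ∘ T a) :=
  ⟨hg.1.comp ((differentiableOn_T ha).mono ball_subset_closedBall) (mapsTo_T_ball ha),
    hg.2.comp (mapsTo_T_ball ha)⟩

lemma dslope_zero (hg : Sclass g) (hg0 : g 0 = 0) : Sclass (dslope g 0) := by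
  refine ⟨(differentiableOn_dslope (ball_mem_nhds 0 one_pos)).mpr hg.1, fun z hz ↦ ?_⟩
  have hmaps : Set.MapsTo g (ball 0 1) (closedBall (g 0) 1) := by
    rw [hg0]
    exact hg.2
  simpa using norm_dslope_le_div_of_mapsTo_ball hg.1 hmaps hz

lemma exists_eq_T_neg_mul (hg : Sclass g) (ha : ‖a‖ < 1) (hga : g a = 0) :
    ∃ q, Sclass q ∧ ∀ z ∈ ball (0 : ℂ) 1, g z = T (-a) z * q z := by
  have hk0 : (g ∘ T a) 0 = 0 := by rw [Function.comp_apply, T_zero_right, hga]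
  refine ⟨dslope (g ∘ T a) 0 ∘ T (-a),
    ((hg.comp_T ha).dslope_zero hk0).comp_T (by rwa [norm_neg]), fun z hz ↦ ?_⟩
  calc g z = (g ∘ T a) (T (-a) z) := by
        rw [Function.comp_apply, T_T_neg ha (mem_ball_zero_iff.mp hz).le]
    _ = T (-a) z * dslope (g ∘ T a) 0 (T (-a) z) := by
        simpa only [hk0, sub_zero, smul_eq_mul] using (sub_smul_dslope (g ∘ T a) 0 (T (-a) z)).symm

end Sclass

lemma Hclass.sclass {f : ℂ → ℂ} (hf : Hclass f) : Sclass f :=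
  ⟨hf.1, hf.2.mono_right ball_subset_closedBall⟩

/-- Any `f ∈ ℋ` with `f(0) = 0` and `f(z₀) = w₀` has the form
`f(z) = z·T_{u₀}(T_{-z₀}(z)·f*(z))` with `u₀ = w₀/z₀`, for some `f* ∈ 𝒮`. -/
theorem dieudonne_form (z₀ w₀ : ℂ)
    (hz₀ : z₀ ∈ ball (0 : ℂ) 1) (hw₀ : w₀ ∈ ball (0 : ℂ) 1)
    (hlt : ‖w₀‖ < ‖z₀‖) (u₀ : ℂ) (hu₀ : u₀ = w₀ / z₀)
    (f : ℂ → ℂ) (hf : Hclass f) (hf0 : f 0 = 0) (hfz₀ : f z₀ = w₀) :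
    ∃ fstar : ℂ → ℂ, Sclass fstar ∧
      ∀ z ∈ ball (0 : ℂ) 1, f z = z * T u₀ (T (-z₀) z * fstar z) := by
  have hz₀_ne : z₀ ≠ 0 := norm_pos_iff.mp ((norm_nonneg w₀).trans_lt hlt)
  have hu₀_lt : ‖u₀‖ < 1 := by rwa [hu₀, norm_div, div_lt_one (norm_pos_iff.mpr hz₀_ne)]
  obtain ⟨g, hg, hfg⟩ : ∃ g, Sclass g ∧ ∀ z ∈ ball (0 : ℂ) 1, f z = z * g z := by
    simpa only [neg_zero, T_zero_left] using
      hf.sclass.exists_eq_T_neg_mul (norm_zero.trans_lt one_pos) hf0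
  have hgz₀ : g z₀ = u₀ := by
    rw [hu₀, ← hfz₀, hfg z₀ hz₀, mul_div_cancel_left₀ _ hz₀_ne]
  have hvanish : (T (-u₀) ∘ g) z₀ = 0 := by rw [Function.comp_apply, hgz₀, T_neg_self]
  obtain ⟨fstar, hfstar, hfactor⟩ :=
    (hg.T_comp (by rwa [norm_neg])).exists_eq_T_neg_mul (mem_ball_zero_iff.mp hz₀) hvanish
  refine ⟨fstar, hfstar, fun z hz ↦ ?_⟩
  have hgz : ‖g z‖ ≤ 1 := mem_closedBall_zero_iff.mp (hg.2 hz)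
  rw [← hfactor z hz, Function.comp_apply, T_T_neg hu₀_lt hgz, hfg z hz]
end

section
/- For every n ≥ 2, the quantity F_n(γ₁, …, γ_{n−1}, γ_n) − (1 − |γ₁|²)·(1 − |γ₂|²)···(1 − |γ_{n−1}|²)·γ_n does not depend on γ_n; that is, for all γ₁, …, γ_{n−1} ∈ ℂ and all γ_n, γ_n' ∈ ℂ, F_n(γ₁, …, γ_{n−1}, γ_n) − (∏_{k=1}^{n−1}(1 − |γ_k|²))·γ_n = F_n(γ₁, …, γ_{n−1}, γ_n') − (∏_{k=1}^{n−1}(1 − |γ_k|²))·γ_n'. -/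
open Complex

/-- The functions `F_n` of `n` complex variables (given as a sequence `γ` with `γ i`
standing for `γ_{i+1}`): `F₁(γ₁) = γ₁`, `F₂(γ₁,γ₂) = (1-|γ₁|²)γ₂`, and for `n ≥ 3`,
`F_n(γ₁,…,γ_n) = (1-|γ₁|²)F_{n-1}(γ₂,…,γ_n)
  - conj(γ₁)·∑_{k=2}^{n-1} F_{n-k}(γ₂,…,γ_{n-k+1})·F_k(γ₁,…,γ_k)`. -/
noncomputable def F : ℕ → (ℕ → ℂ) → ℂ
  | 0, _ => 0
  | 1, γ => γ 0
  | 2, γ => (1 - (‖γ 0‖ : ℂ) ^ 2) * γ 1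
  | n + 3, γ =>
      (1 - (‖γ 0‖ : ℂ) ^ 2) * F (n + 2) (fun i => γ (i + 1)) -
        (starRingEnd ℂ) (γ 0) *
          ∑ k ∈ (Finset.Icc 2 (n + 2)).attach,
            F (n + 3 - k.1) (fun i => γ (i + 1)) * F k.1 γ
termination_by n _ => n
decreasing_by
  all_goals first
    | omega
    | (have := Finset.mem_Icc.mp k.2; omega)

/-!
Replacing `γ_n` by another value changes only the term `(1 - |γ₁|²) F_{n-1}(γ₂, …, γ_n)` of the
recursion, because every factor in the convolution sum involves only `γ₁, …, γ_{n-1}`. Iterating,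
the change of `γ_n` is multiplied by one factor `1 - |γ_k|²` for each `k < n`.
-/

theorem F_add_two (n : ℕ) (γ : ℕ → ℂ) :
    F (n + 2) γ = (1 - (‖γ 0‖ : ℂ) ^ 2) * F (n + 1) (fun i => γ (i + 1)) -
      (starRingEnd ℂ) (γ 0) *
        ∑ k ∈ Finset.Icc 2 (n + 1), F (n + 2 - k) (fun i => γ (i + 1)) * F k γ := by
  cases n with
  | zero => simp [F]
  | succ n =>
    rw [F, Finset.sum_attach (Finset.Icc 2 (n + 2))
      fun k => F (n + 3 - k) (fun i => γ (i + 1)) * F k γ]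

theorem dependsOn_F (n : ℕ) : DependsOn (F n) (Set.Iio n) := by
  induction n using Nat.strong_induction_on with
  | _ n ih =>
    intro γ δ h
    replace h : ∀ i < n, γ i = δ i := h
    match n with
    | 0 => simp only [F]
    | 1 => simpa only [F] using h 0 one_pos
    | n + 2 =>
      have F_shift {m : ℕ} (hm : m < n + 2) :
          F m (fun i => γ (i + 1)) = F m (fun i => δ (i + 1)) :=
        ih m hm fun i (hi : i < m) => h (i + 1) (by omega)
      have F_initial {k : ℕ} (hk : k < n + 2) : F k γ = F k δ :=
        ih k hk fun i (hi : i < k) => h i (by omega)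
      rw [F_add_two, F_add_two, h 0 (by omega), F_shift (by omega)]
      congr 2
      refine Finset.sum_congr rfl fun k hk => ?_
      rw [Finset.mem_Icc] at hk
      rw [F_shift (by omega), F_initial (by omega)]

theorem F_succ_sub_F_succ_of_eqOn {n : ℕ} {γ δ : ℕ → ℂ} (h : Set.EqOn γ δ (Set.Iio n)) :
    F (n + 1) γ - F (n + 1) δ =
      (∏ k ∈ Finset.range n, (1 - (‖γ k‖ : ℂ) ^ 2)) * (γ n - δ n) := by
  induction n generalizing γ δ with
  | zero => simp [F]
  | succ n ih =>
    replace h : ∀ i < n + 1, γ i = δ i := h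
    have sum_eq : ∑ k ∈ Finset.Icc 2 (n + 1), F (n + 2 - k) (fun i => γ (i + 1)) * F k γ =
        ∑ k ∈ Finset.Icc 2 (n + 1), F (n + 2 - k) (fun i => δ (i + 1)) * F k δ := by
      refine Finset.sum_congr rfl fun k hk => ?_
      rw [Finset.mem_Icc] at hk
      congr 1
      · exact dependsOn_F _ fun i (hi : i < n + 2 - k) => h (i + 1) (by omega)
      · exact dependsOn_F _ fun i (hi : i < k) => h i (by omega)
    have shift_sub : F (n + 1) (fun i => γ (i + 1)) - F (n + 1) (fun i => δ (i + 1)) =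
        (∏ k ∈ Finset.range n, (1 - (‖γ (k + 1)‖ : ℂ) ^ 2)) * (γ (n + 1) - δ (n + 1)) :=
      ih fun i (hi : i < n) => h (i + 1) (by omega)
    rw [F_add_two, F_add_two, sum_eq, ← h 0 n.succ_pos, Finset.prod_range_succ']
    linear_combination (1 - (‖γ 0‖ : ℂ) ^ 2) * shift_sub

theorem F_succ_update_sub_F_succ (n : ℕ) (γ : ℕ → ℂ) (a : ℂ) :
    F (n + 1) (Function.update γ n a) - F (n + 1) γ =
      (∏ k ∈ Finset.range n, (1 - (‖γ k‖ : ℂ) ^ 2)) * (a - γ n) := by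
  have agree : Set.EqOn γ (Function.update γ n a) (Set.Iio n) := fun i hi =>
    (Function.update_of_ne (ne_of_lt hi) a γ).symm
  have sub_eq := F_succ_sub_F_succ_of_eqOn agree
  rw [Function.update_self] at sub_eq
  linear_combination -sub_eq

/-- Schur's recurrence relation: for `n ≥ 2`, the quantity
`F_n(γ₁,…,γ_n) - (1-|γ₁|²)⋯(1-|γ_{n-1}|²)·γ_n` does not depend on `γ_n`. -/
theorem F_sub_leading_indep (n : ℕ) (hn : 2 ≤ n) (γ : ℕ → ℂ) (a b : ℂ) :
    F n (Function.update γ (n - 1) a) -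
        (∏ k ∈ Finset.range (n - 1), (1 - (‖γ k‖ : ℂ) ^ 2)) * a =
      F n (Function.update γ (n - 1) b) -
        (∏ k ∈ Finset.range (n - 1), (1 - (‖γ k‖ : ℂ) ^ 2)) * b := by
  obtain ⟨m, rfl⟩ := Nat.exists_eq_add_of_le' (one_le_two.trans hn)
  rw [Nat.add_sub_cancel]
  linear_combination F_succ_update_sub_F_succ m γ a - F_succ_update_sub_F_succ m γ b
end

section
/- Let z₀, γ₀ ∈ 𝔻 and γ₁, γ₂ ∈ 𝔻. Then there exists c ∈ ℂ such that the set {f'''(z₀) : f ∈ ℋ, f(z₀) = γ₀, H¹f(z₀) = γ₁, H²f(z₀) = γ₂} is exactly the closed disk centered at c with radius ρ₃ := 6(1 − |γ₀|²)(1 − |γ₁|²)(1 − |γ₂|²)/(1 − |z₀|²)³. -/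
open Complex Metric

/-- The (first-order) hyperbolic derivative `H¹f(z) = (1-|z|²)f'(z)/(1-|f(z)|²)`. -/
noncomputable def H1 (f : ℂ → ℂ) (z : ℂ) : ℂ :=
  ((1 - ‖z‖ ^ 2 : ℝ) : ℂ) * deriv f z / ((1 - ‖f z‖ ^ 2 : ℝ) : ℂ)

/-- The second Peschl invariant derivative `D₂f(z)`. -/
noncomputable def D2 (f : ℂ → ℂ) (z : ℂ) : ℂ :=
  ((1 - ‖z‖ ^ 2 : ℝ) : ℂ) ^ 2 / ((1 - ‖f z‖ ^ 2 : ℝ) : ℂ) *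
    (iteratedDeriv 2 f z - 2 * (starRingEnd ℂ) z * deriv f z / ((1 - ‖z‖ ^ 2 : ℝ) : ℂ) +
      2 * (starRingEnd ℂ) (f z) * (deriv f z) ^ 2 / ((1 - ‖f z‖ ^ 2 : ℝ) : ℂ))

/-- The second-order hyperbolic derivative `H²f(z) = D₂f(z)/(2(1-|H¹f(z)|²))`. -/
noncomputable def H2 (f : ℂ → ℂ) (z : ℂ) : ℂ :=
  D2 f z / (2 * ((1 - ‖H1 f z‖ ^ 2 : ℝ) : ℂ))

/-!
For `f` in the Schur class with `|f(z₀)| < 1`, Schwarz's lemma, transported by disk automorphisms,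
shows that the quotient `g` in `[f(z), f(z₀)] = [z, z₀] g(z)`, where `[w, a] = (w - a)/(1 - āw)`, is
again in the Schur class, and every Schur function `g` arises from an `f` with prescribed `f(z₀)`.
Since `H¹f(z₀) = g(z₀)` and `H²f(z₀) = H¹g(z₀)`, taking quotients three times turns the constraints
into the values at `z₀` of `f`, `g` and the next quotient `h`, and leaves the last quotient `k` an
arbitrary Schur function. Differentiating the three relations at `z₀` expresses `f'''(z₀)` as a
center depending only on `z₀, γ₀, γ₁, γ₂` plus `ρ₃ k(z₀)`, where `k(z₀)` ranges over the closed
unit disk.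
-/

open scoped ComplexConjugate

theorem ofReal_one_sub_norm_sq (z : ℂ) : ((1 - ‖z‖ ^ 2 : ℝ) : ℂ) = 1 - conj z * z := by
  simp [conj_mul']

theorem one_sub_conj_mul_ne_zero {a w : ℂ} (ha : ‖a‖ < 1) (hw : ‖w‖ ≤ 1) :
    1 - conj a * w ≠ 0 := by
  have hlt : ‖conj a * w‖ < 1 := by
    rw [norm_mul, norm_conj]
    exact mul_lt_one_of_nonneg_of_lt_one_left (norm_nonneg a) ha hw
  intro h
  simp [← sub_eq_zero.1 h] at hlt

theorem norm_one_sub_conj_mul_sq_sub_norm_sub_sq (a w : ℂ) :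
    ‖1 - conj a * w‖ ^ 2 - ‖w - a‖ ^ 2 = (1 - ‖a‖ ^ 2) * (1 - ‖w‖ ^ 2) := by
  simp only [← normSq_eq_norm_sq, normSq_apply, sub_re, sub_im, mul_re, mul_im, conj_re, conj_im,
    one_re, one_im]
  ring

/-- The disk automorphism `w ↦ [w, a] = (w - a) / (1 - āw)` sending `a` to `0`; as a function of
both arguments it is the complex pseudo-hyperbolic distance. -/
noncomputable def diskMobius (a w : ℂ) : ℂ := (w - a) / (1 - conj a * w)

section DiskMobius

variable {a w : ℂ}

@[simp]
theorem diskMobius_self (a : ℂ) : diskMobius a a = 0 := by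
  simp [diskMobius]

@[simp]
theorem diskMobius_neg_zero (a : ℂ) : diskMobius (-a) 0 = a := by
  simp [diskMobius]

theorem norm_diskMobius_le_one (ha : ‖a‖ < 1) (hw : ‖w‖ ≤ 1) : ‖diskMobius a w‖ ≤ 1 := by
  rw [diskMobius, norm_div]
  refine div_le_one_of_le₀ (le_of_sq_le_sq ?_ (norm_nonneg _)) (norm_nonneg _)
  rw [← sub_nonneg, norm_one_sub_conj_mul_sq_sub_norm_sub_sq]
  exact mul_nonneg (sub_nonneg.2 (pow_le_one₀ (norm_nonneg a) ha.le))
    (sub_nonneg.2 (pow_le_one₀ (norm_nonneg w) hw))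

theorem norm_diskMobius_lt_one (ha : ‖a‖ < 1) (hw : ‖w‖ < 1) : ‖diskMobius a w‖ < 1 := by
  rw [diskMobius, norm_div, div_lt_one (norm_pos_iff.2 (one_sub_conj_mul_ne_zero ha hw.le))]
  refine lt_of_pow_lt_pow_left₀ 2 (norm_nonneg _) ?_
  rw [← sub_pos, norm_one_sub_conj_mul_sq_sub_norm_sub_sq]
  exact mul_pos (sub_pos.2 (pow_lt_one₀ (norm_nonneg a) ha two_ne_zero))
    (sub_pos.2 (pow_lt_one₀ (norm_nonneg w) hw two_ne_zero))

theorem mapsTo_diskMobius_closedBall (ha : ‖a‖ < 1) :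
    Set.MapsTo (diskMobius a) (closedBall 0 1) (closedBall 0 1) := fun _ hw ↦
  mem_closedBall_zero_iff.2 (norm_diskMobius_le_one ha (mem_closedBall_zero_iff.1 hw))

theorem mapsTo_diskMobius_ball (ha : ‖a‖ < 1) :
    Set.MapsTo (diskMobius a) (ball 0 1) (ball 0 1) := fun _ hw ↦
  mem_ball_zero_iff.2 (norm_diskMobius_lt_one ha (mem_ball_zero_iff.1 hw))

theorem differentiableOn_diskMobius (ha : ‖a‖ < 1) :
    DifferentiableOn ℂ (diskMobius a) (closedBall 0 1) :=
  DifferentiableOn.div (by fun_prop) (by fun_prop) fun _ hw ↦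
    one_sub_conj_mul_ne_zero ha (mem_closedBall_zero_iff.1 hw)

theorem diskMobius_neg_diskMobius (ha : ‖a‖ < 1) (hw : ‖w‖ ≤ 1) :
    diskMobius (-a) (diskMobius a w) = w := by
  have hden : 1 - conj (-a) * diskMobius a w ≠ 0 :=
    one_sub_conj_mul_ne_zero (by rwa [norm_neg]) (norm_diskMobius_le_one ha hw)
  have hmul : diskMobius a w * (1 - conj a * w) = w - a :=
    div_mul_cancel₀ _ (one_sub_conj_mul_ne_zero ha hw)
  rw [diskMobius, div_eq_iff hden, map_neg]
  linear_combination hmul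

theorem diskMobius_diskMobius_neg (ha : ‖a‖ < 1) (hw : ‖w‖ ≤ 1) :
    diskMobius a (diskMobius (-a) w) = w := by
  simpa using diskMobius_neg_diskMobius (a := -a) (by rwa [norm_neg]) hw

end DiskMobius

/-- The Schur class: analytic maps from the open unit disk to the closed unit disk. Besides `ℋ` it
contains the unimodular constants, which occur as hyperbolic quotients of disk automorphisms. -/
def SchurClass (f : ℂ → ℂ) : Prop :=
  DifferentiableOn ℂ f (ball 0 1) ∧ Set.MapsTo f (ball 0 1) (closedBall 0 1)

theorem Hclass.schurClass {f : ℂ → ℂ} (hf : Hclass f) : SchurClass f :=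
  ⟨hf.1, hf.2.mono_right ball_subset_closedBall⟩

theorem schurClass_const {κ : ℂ} (hκ : κ ∈ closedBall 0 1) : SchurClass fun _ ↦ κ :=
  ⟨differentiableOn_const κ, fun _ _ ↦ hκ⟩

/-- `g` is the hyperbolic difference quotient of `f` at `z₀`: both belong to the Schur class,
`z₀` and `f z₀` lie in the open unit disk, and `[f(z), f(z₀)] = [z, z₀] g(z)` throughout the disk.
This is a relation because `f` is constructed from `g` as well as `g` from `f`. -/
structure IsHyperbolicQuotient (z₀ : ℂ) (f g : ℂ → ℂ) : Prop where
  left : SchurClass f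
  right : SchurClass g
  base_mem : z₀ ∈ ball (0 : ℂ) 1
  value_mem : f z₀ ∈ ball (0 : ℂ) 1
  diskMobius_eq : ∀ z ∈ ball (0 : ℂ) 1, diskMobius (f z₀) (f z) = diskMobius z₀ z * g z

theorem SchurClass.exists_isHyperbolicQuotient {f : ℂ → ℂ} {z₀ : ℂ} (hf : SchurClass f)
    (hz₀ : z₀ ∈ ball (0 : ℂ) 1) (hfz₀ : f z₀ ∈ ball (0 : ℂ) 1) :
    ∃ g, IsHyperbolicQuotient z₀ f g := by
  have hnz₀ : ‖z₀‖ < 1 := mem_ball_zero_iff.1 hz₀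
  have hnfz₀ : ‖f z₀‖ < 1 := mem_ball_zero_iff.1 hfz₀
  have hneg : ‖-z₀‖ < 1 := by rwa [norm_neg]
  let u : ℂ → ℂ := diskMobius (f z₀) ∘ f ∘ diskMobius (-z₀)
  have hu_zero : u 0 = 0 := by simp [u]
  have hu_maps : Set.MapsTo u (ball 0 1) (closedBall (u 0) 1) := by
    rw [hu_zero]
    exact (mapsTo_diskMobius_closedBall hnfz₀).comp (hf.2.comp (mapsTo_diskMobius_ball hneg))
  have hu_diff : DifferentiableOn ℂ u (ball 0 1) :=
    (differentiableOn_diskMobius hnfz₀).comp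
      (hf.1.comp ((differentiableOn_diskMobius hneg).mono ball_subset_closedBall)
        (mapsTo_diskMobius_ball hneg))
      (hf.2.comp (mapsTo_diskMobius_ball hneg))
  have hslope_diff : DifferentiableOn ℂ (dslope u 0) (ball 0 1) :=
    (differentiableOn_dslope (ball_mem_nhds 0 one_pos)).2 hu_diff
  have hslope_maps : Set.MapsTo (dslope u 0) (ball 0 1) (closedBall 0 1) := fun w hw ↦
    mem_closedBall_zero_iff.2 (by simpa using norm_dslope_le_div_of_mapsTo_ball hu_diff hu_maps hw)
  refine ⟨dslope u 0 ∘ diskMobius z₀, hf, ⟨?_, ?_⟩, hz₀, hfz₀, fun z hz ↦ ?_⟩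
  · exact hslope_diff.comp ((differentiableOn_diskMobius hnz₀).mono ball_subset_closedBall)
      (mapsTo_diskMobius_ball hnz₀)
  · exact hslope_maps.comp (mapsTo_diskMobius_ball hnz₀)
  · have hu_apply : u (diskMobius z₀ z) = diskMobius (f z₀) (f z) := by
      simp only [u, Function.comp_apply,
        diskMobius_neg_diskMobius hnz₀ (mem_ball_zero_iff.1 hz).le]
    simpa [hu_zero, hu_apply] using (sub_smul_dslope u 0 (diskMobius z₀ z)).symm

theorem SchurClass.exists_hclass_isHyperbolicQuotient {g : ℂ → ℂ} {z₀ γ : ℂ} (hg : SchurClass g)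
    (hz₀ : z₀ ∈ ball (0 : ℂ) 1) (hγ : γ ∈ ball (0 : ℂ) 1) :
    ∃ f, Hclass f ∧ f z₀ = γ ∧ IsHyperbolicQuotient z₀ f g := by
  have hnz₀ : ‖z₀‖ < 1 := mem_ball_zero_iff.1 hz₀
  have hnγ : ‖γ‖ < 1 := mem_ball_zero_iff.1 hγ
  have hneg : ‖-γ‖ < 1 := by rwa [norm_neg]
  let v : ℂ → ℂ := fun z ↦ diskMobius z₀ z * g z
  have hv_diff : DifferentiableOn ℂ v (ball 0 1) :=
    ((differentiableOn_diskMobius hnz₀).mono ball_subset_closedBall).mul hg.1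
  have hv_maps : Set.MapsTo v (ball 0 1) (ball 0 1) := fun z hz ↦ by
    rw [mem_ball_zero_iff, norm_mul]
    exact mul_lt_one_of_nonneg_of_lt_one_left (norm_nonneg _)
      (norm_diskMobius_lt_one hnz₀ (mem_ball_zero_iff.1 hz)) (mem_closedBall_zero_iff.1 (hg.2 hz))
  let f : ℂ → ℂ := diskMobius (-γ) ∘ v
  have hf : Hclass f :=
    ⟨((differentiableOn_diskMobius hneg).mono ball_subset_closedBall).comp hv_diff hv_maps,
      (mapsTo_diskMobius_ball hneg).comp hv_maps⟩
  have hfz₀ : f z₀ = γ := by simp [f, v]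
  refine ⟨f, hf, hfz₀, hf.schurClass, hg, hz₀, hfz₀ ▸ hγ, fun z hz ↦ ?_⟩
  rw [hfz₀]
  exact diskMobius_diskMobius_neg hnγ (mem_ball_zero_iff.1 (hv_maps hz)).le

theorem iteratedDeriv_succ_sub_const {𝕜 F : Type*} [NontriviallyNormedField 𝕜]
    [NormedAddCommGroup F] [NormedSpace 𝕜 F] (f : 𝕜 → F) (c : F) (n : ℕ) (x : 𝕜) :
    iteratedDeriv (n + 1) (fun y ↦ f y - c) x = iteratedDeriv (n + 1) f x := by
  simp [iteratedDeriv_succ']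

theorem iteratedDeriv_succ_affine_mul {𝕜 : Type*} [NontriviallyNormedField 𝕜] {f : 𝕜 → 𝕜} {x : 𝕜}
    {n : ℕ} (hf : ContDiffAt 𝕜 (n + 1 : ℕ) f x) (a b : 𝕜) :
    iteratedDeriv (n + 1) (fun y ↦ (a + b * y) * f y) x =
      (a + b * x) * iteratedDeriv (n + 1) f x + (n + 1) * b * iteratedDeriv n f x := by
  have hderiv : deriv (fun y ↦ a + b * y) = fun _ ↦ b := by
    ext y
    simp
  have haffine : ∀ i : ℕ, iteratedDeriv (i + 2) (fun y ↦ a + b * y) x = 0 := fun i ↦ by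
    rw [iteratedDeriv_succ', hderiv, iteratedDeriv_const, if_neg (Nat.succ_ne_zero i)]
  rw [iteratedDeriv_fun_mul (by fun_prop) hf, Finset.sum_range_succ', Finset.sum_range_succ',
    Finset.sum_eq_zero fun i _ ↦ by rw [haffine, mul_zero, zero_mul]]
  simp only [zero_add, Nat.choose_one_right, Nat.choose_zero_right, Nat.cast_add, Nat.cast_one,
    iteratedDeriv_zero, iteratedDeriv_one, hderiv, add_tsub_cancel_right, tsub_zero, one_mul]
  ring

namespace IsHyperbolicQuotient

variable {z₀ : ℂ} {f g : ℂ → ℂ}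

theorem one_sub_conj_base_ne_zero (hfg : IsHyperbolicQuotient z₀ f g) : 1 - conj z₀ * z₀ ≠ 0 :=
  have hz₀ := mem_ball_zero_iff.1 hfg.base_mem
  one_sub_conj_mul_ne_zero hz₀ hz₀.le

theorem one_sub_conj_value_ne_zero (hfg : IsHyperbolicQuotient z₀ f g) :
    1 - conj (f z₀) * f z₀ ≠ 0 :=
  have hfz₀ := mem_ball_zero_iff.1 hfg.value_mem
  one_sub_conj_mul_ne_zero hfz₀ hfz₀.le

theorem contDiffAt_left (hfg : IsHyperbolicQuotient z₀ f g) {n : ℕ} : ContDiffAt ℂ n f z₀ :=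
  (hfg.left.1.analyticAt (isOpen_ball.mem_nhds hfg.base_mem)).contDiffAt

theorem contDiffAt_right (hfg : IsHyperbolicQuotient z₀ f g) {n : ℕ} : ContDiffAt ℂ n g z₀ :=
  (hfg.right.1.analyticAt (isOpen_ball.mem_nhds hfg.base_mem)).contDiffAt

theorem one_sub_conj_mul_mul_sub_eq (hfg : IsHyperbolicQuotient z₀ f g) {z : ℂ}
    (hz : z ∈ ball (0 : ℂ) 1) :
    (1 - conj z₀ * z) * (f z - f z₀) = (z - z₀) * ((1 - conj (f z₀) * f z) * g z) := by
  have hden : 1 - conj z₀ * z ≠ 0 :=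
    one_sub_conj_mul_ne_zero (mem_ball_zero_iff.1 hfg.base_mem) (mem_ball_zero_iff.1 hz).le
  have hfden : 1 - conj (f z₀) * f z ≠ 0 :=
    one_sub_conj_mul_ne_zero (mem_ball_zero_iff.1 hfg.value_mem)
      (mem_closedBall_zero_iff.1 (hfg.left.2 hz))
  have heq := hfg.diskMobius_eq z hz
  rw [diskMobius, diskMobius, div_mul_eq_mul_div, div_eq_div_iff hfden hden] at heq
  linear_combination heq

theorem iteratedDeriv_succ_eq (hfg : IsHyperbolicQuotient z₀ f g) (n : ℕ) :
    (1 - conj z₀ * z₀) * iteratedDeriv (n + 1) f z₀ =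
      (n + 1) * (conj z₀ * iteratedDeriv n (fun z ↦ f z - f z₀) z₀ +
        iteratedDeriv n (fun z ↦ (1 - conj (f z₀) * f z) * g z) z₀) := by
  have hf : ContDiffAt ℂ (n + 1 : ℕ) f z₀ := hfg.contDiffAt_left
  have hg : ContDiffAt ℂ (n + 1 : ℕ) g z₀ := hfg.contDiffAt_right
  have hfun : (fun z ↦ (1 + -conj z₀ * z) * (f z - f z₀)) =ᶠ[nhds z₀]
      fun z ↦ (-z₀ + 1 * z) * ((1 - conj (f z₀) * f z) * g z) := by
    filter_upwards [isOpen_ball.mem_nhds hfg.base_mem] with z hz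
    linear_combination hfg.one_sub_conj_mul_mul_sub_eq hz
  have heq := hfun.iteratedDeriv_eq (n + 1)
  rw [iteratedDeriv_succ_affine_mul (by fun_prop), iteratedDeriv_succ_affine_mul (by fun_prop),
    iteratedDeriv_succ_sub_const] at heq
  linear_combination heq

theorem deriv_eq (hfg : IsHyperbolicQuotient z₀ f g) :
    (1 - conj z₀ * z₀) * deriv f z₀ = (1 - conj (f z₀) * f z₀) * g z₀ := by
  simpa using hfg.iteratedDeriv_succ_eq 0

theorem iteratedDeriv_two_eq (hfg : IsHyperbolicQuotient z₀ f g) :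
    (1 - conj z₀ * z₀) * iteratedDeriv 2 f z₀ =
      2 * (conj z₀ * deriv f z₀ + (1 - conj (f z₀) * f z₀) * deriv g z₀ -
        conj (f z₀) * deriv f z₀ * g z₀) := by
  have hf : ContDiffAt ℂ (1 : ℕ) f z₀ := hfg.contDiffAt_left
  have hg : ContDiffAt ℂ (1 : ℕ) g z₀ := hfg.contDiffAt_right
  have heq := hfg.iteratedDeriv_succ_eq 1
  rw [iteratedDeriv_succ_sub_const, iteratedDeriv_fun_mul (by fun_prop) hg] at heq
  simp only [Nat.reduceAdd, Nat.cast_one, zero_add, iteratedDeriv_one, Finset.sum_range_succ,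
    Finset.range_one, Finset.sum_singleton, Nat.choose_succ_self_right, iteratedDeriv_zero, one_mul,
    tsub_zero, Nat.choose_self, Order.lt_one_iff, iteratedDeriv_const_sub, iteratedDeriv_neg,
    iteratedDeriv_const_mul_field, mul_neg, tsub_self, neg_mul] at heq
  linear_combination heq

theorem iteratedDeriv_three_eq (hfg : IsHyperbolicQuotient z₀ f g) :
    (1 - conj z₀ * z₀) * iteratedDeriv 3 f z₀ =
      3 * (conj z₀ * iteratedDeriv 2 f z₀ + (1 - conj (f z₀) * f z₀) * iteratedDeriv 2 g z₀ -
        2 * conj (f z₀) * deriv f z₀ * deriv g z₀ - conj (f z₀) * iteratedDeriv 2 f z₀ * g z₀) := by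
  have hf : ContDiffAt ℂ (2 : ℕ) f z₀ := hfg.contDiffAt_left
  have hg : ContDiffAt ℂ (2 : ℕ) g z₀ := hfg.contDiffAt_right
  have heq := hfg.iteratedDeriv_succ_eq 2
  rw [iteratedDeriv_succ_sub_const, iteratedDeriv_fun_mul (by fun_prop) hg] at heq
  simp only [Nat.reduceAdd, Nat.cast_ofNat, Finset.sum_range_succ, Finset.range_one,
    Finset.sum_singleton, Nat.choose_zero_right, Nat.cast_one, iteratedDeriv_zero, one_mul,
    tsub_zero, Nat.choose_succ_self_right, Order.lt_one_iff, iteratedDeriv_const_sub,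
    iteratedDeriv_neg, iteratedDeriv_const_mul_field, iteratedDeriv_one, mul_neg,
    Nat.add_one_sub_one, neg_mul, Nat.choose_self, Order.lt_two_iff, zero_le, tsub_self] at heq
  linear_combination heq

theorem H1_eq (hfg : IsHyperbolicQuotient z₀ f g) : H1 f z₀ = g z₀ := by
  rw [H1, ofReal_one_sub_norm_sq, ofReal_one_sub_norm_sq, hfg.deriv_eq,
    mul_div_cancel_left₀ _ hfg.one_sub_conj_value_ne_zero]

theorem D2_eq (hfg : IsHyperbolicQuotient z₀ f g) :
    D2 f z₀ = 2 * ((1 - conj z₀ * z₀) * deriv g z₀) := by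
  have hs := hfg.one_sub_conj_base_ne_zero
  have ht := hfg.one_sub_conj_value_ne_zero
  have hderiv := hfg.deriv_eq
  have htwo := hfg.iteratedDeriv_two_eq
  rw [D2, ofReal_one_sub_norm_sq, ofReal_one_sub_norm_sq]
  generalize 1 - conj z₀ * z₀ = s at *
  generalize 1 - conj (f z₀) * f z₀ = t at *
  field_simp
  linear_combination t * htwo + 2 * conj (f z₀) * deriv f z₀ * hderiv

theorem H2_eq (hfg : IsHyperbolicQuotient z₀ f g) : H2 f z₀ = H1 g z₀ := by
  rw [H2, hfg.D2_eq, hfg.H1_eq, mul_div_mul_left _ _ two_ne_zero, H1,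
    ofReal_one_sub_norm_sq z₀]

end IsHyperbolicQuotient

/-- The center of the variability region of `f'''(z₀)`, where `f(z₀) = γ₀`, `H¹f(z₀) = γ₁` and
`H²f(z₀) = γ₂`. Here `1 - conj z * z` stands for `1 - |z|²`. -/
noncomputable def thirdDerivCenter (z₀ γ₀ γ₁ γ₂ : ℂ) : ℂ :=
  6 * (1 - conj γ₀ * γ₀) / (1 - conj z₀ * z₀) ^ 3 *
    (γ₁ * (conj z₀ - conj γ₀ * γ₁) ^ 2 +
      (1 - conj γ₁ * γ₁) * γ₂ * (2 * (conj z₀ - conj γ₀ * γ₁) - conj γ₁ * γ₂))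

/-- The radius `ρ₃` of the variability region of `f'''(z₀)`, where `f(z₀) = γ₀`, `H¹f(z₀) = γ₁` and
`H²f(z₀) = γ₂`. -/
noncomputable def thirdDerivRadius (z₀ γ₀ γ₁ γ₂ : ℂ) : ℝ :=
  6 * (1 - ‖γ₀‖ ^ 2) * (1 - ‖γ₁‖ ^ 2) * (1 - ‖γ₂‖ ^ 2) / (1 - ‖z₀‖ ^ 2) ^ 3

theorem thirdDerivRadius_nonneg {z₀ γ₀ γ₁ γ₂ : ℂ} (hz₀ : z₀ ∈ ball (0 : ℂ) 1)
    (hγ₀ : γ₀ ∈ ball (0 : ℂ) 1) (hγ₁ : γ₁ ∈ ball (0 : ℂ) 1) (hγ₂ : γ₂ ∈ ball (0 : ℂ) 1) :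
    0 ≤ thirdDerivRadius z₀ γ₀ γ₁ γ₂ := by
  have hnonneg : ∀ z ∈ ball (0 : ℂ) 1, 0 ≤ 1 - ‖z‖ ^ 2 := fun z hz ↦
    sub_nonneg.2 (pow_le_one₀ (norm_nonneg z) (mem_ball_zero_iff.1 hz).le)
  exact div_nonneg
    (mul_nonneg (mul_nonneg (mul_nonneg (by norm_num) (hnonneg γ₀ hγ₀)) (hnonneg γ₁ hγ₁))
      (hnonneg γ₂ hγ₂))
    (pow_nonneg (hnonneg z₀ hz₀) 3)

theorem ofReal_thirdDerivRadius (z₀ γ₀ γ₁ γ₂ : ℂ) :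
    (thirdDerivRadius z₀ γ₀ γ₁ γ₂ : ℂ) =
      6 * (1 - conj γ₀ * γ₀) * (1 - conj γ₁ * γ₁) * (1 - conj γ₂ * γ₂) /
        (1 - conj z₀ * z₀) ^ 3 := by
  simp [thirdDerivRadius, conj_mul']

theorem IsHyperbolicQuotient.iteratedDeriv_three_eq_center_add_radius_smul {z₀ : ℂ}
    {f g h k : ℂ → ℂ} (hfg : IsHyperbolicQuotient z₀ f g) (hgh : IsHyperbolicQuotient z₀ g h)
    (hhk : IsHyperbolicQuotient z₀ h k) :
    iteratedDeriv 3 f z₀ = thirdDerivCenter z₀ (f z₀) (g z₀) (h z₀) +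
      thirdDerivRadius z₀ (f z₀) (g z₀) (h z₀) • k z₀ := by
  have hs := hfg.one_sub_conj_base_ne_zero
  have hf₁ := hfg.deriv_eq
  have hf₂ := hfg.iteratedDeriv_two_eq
  have hf₃ := hfg.iteratedDeriv_three_eq
  have hg₁ := hgh.deriv_eq
  have hg₂ := hgh.iteratedDeriv_two_eq
  have hh₁ := hhk.deriv_eq
  rw [real_smul, ofReal_thirdDerivRadius, thirdDerivCenter]
  generalize 1 - conj z₀ * z₀ = s at *
  generalize 1 - conj (f z₀) * f z₀ = t₀ at *
  generalize 1 - conj (g z₀) * g z₀ = t₁ at *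
  generalize 1 - conj (h z₀) * h z₀ = t₂ at *
  field_simp
  linear_combination s ^ 2 * hf₃ + 3 * s * (conj z₀ - conj (f z₀) * g z₀) * hf₂ +
    3 * s * t₀ * hg₂ + 6 * t₀ * t₁ * hh₁ +
    6 * ((conj z₀ - conj (f z₀) * g z₀) ^ 2 - conj (f z₀) * s * deriv g z₀) * hf₁ +
    6 * t₀ * (2 * (conj z₀ - conj (f z₀) * g z₀) - conj (g z₀) * h z₀) * hg₁

theorem Hclass.exists_iteratedDeriv_three_eq {f : ℂ → ℂ} {z₀ : ℂ} (hf : Hclass f)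
    (hz₀ : z₀ ∈ ball (0 : ℂ) 1) (hH1 : H1 f z₀ ∈ ball (0 : ℂ) 1)
    (hH2 : H2 f z₀ ∈ ball (0 : ℂ) 1) :
    ∃ κ ∈ closedBall (0 : ℂ) 1,
      iteratedDeriv 3 f z₀ = thirdDerivCenter z₀ (f z₀) (H1 f z₀) (H2 f z₀) +
        thirdDerivRadius z₀ (f z₀) (H1 f z₀) (H2 f z₀) • κ := by
  obtain ⟨g, hfg⟩ := hf.schurClass.exists_isHyperbolicQuotient hz₀ (hf.2 hz₀)
  rw [hfg.H1_eq] at hH1 ⊢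
  obtain ⟨h, hgh⟩ := hfg.right.exists_isHyperbolicQuotient hz₀ hH1
  rw [hfg.H2_eq, hgh.H1_eq] at hH2 ⊢
  obtain ⟨k, hhk⟩ := hgh.right.exists_isHyperbolicQuotient hz₀ hH2
  exact ⟨k z₀, hhk.right.2 hz₀, hfg.iteratedDeriv_three_eq_center_add_radius_smul hgh hhk⟩

theorem exists_hclass_iteratedDeriv_three_eq {z₀ γ₀ γ₁ γ₂ κ : ℂ} (hz₀ : z₀ ∈ ball (0 : ℂ) 1)
    (hγ₀ : γ₀ ∈ ball (0 : ℂ) 1) (hγ₁ : γ₁ ∈ ball (0 : ℂ) 1) (hγ₂ : γ₂ ∈ ball (0 : ℂ) 1)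
    (hκ : κ ∈ closedBall (0 : ℂ) 1) :
    ∃ f, Hclass f ∧ f z₀ = γ₀ ∧ H1 f z₀ = γ₁ ∧ H2 f z₀ = γ₂ ∧
      iteratedDeriv 3 f z₀ =
        thirdDerivCenter z₀ γ₀ γ₁ γ₂ + thirdDerivRadius z₀ γ₀ γ₁ γ₂ • κ := by
  obtain ⟨h, hh, rfl, hhk⟩ := (schurClass_const hκ).exists_hclass_isHyperbolicQuotient hz₀ hγ₂
  obtain ⟨g, hg, rfl, hgh⟩ := hh.schurClass.exists_hclass_isHyperbolicQuotient hz₀ hγ₁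
  obtain ⟨f, hf, rfl, hfg⟩ := hg.schurClass.exists_hclass_isHyperbolicQuotient hz₀ hγ₀
  exact ⟨f, hf, rfl, hfg.H1_eq, hfg.H2_eq.trans hgh.H1_eq,
    hfg.iteratedDeriv_three_eq_center_add_radius_smul hgh hhk⟩

/-- Schwarz-Pick Lemma of the third derivative: the variability region of `f'''(z₀)`
over all `f ∈ ℋ` with `f(z₀) = γ₀`, `H¹f(z₀) = γ₁`, `H²f(z₀) = γ₂` is a closed disk
with radius `ρ₃ = 6(1-|γ₀|²)(1-|γ₁|²)(1-|γ₂|²)/(1-|z₀|²)³`. -/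
theorem schwarz_pick_third_variability (z₀ γ₀ γ₁ γ₂ : ℂ)
    (hz₀ : z₀ ∈ ball (0 : ℂ) 1) (hγ₀ : γ₀ ∈ ball (0 : ℂ) 1)
    (hγ₁ : γ₁ ∈ ball (0 : ℂ) 1) (hγ₂ : γ₂ ∈ ball (0 : ℂ) 1) :
    ∃ c : ℂ,
      {w : ℂ | ∃ f : ℂ → ℂ, Hclass f ∧ f z₀ = γ₀ ∧ H1 f z₀ = γ₁ ∧ H2 f z₀ = γ₂ ∧
          iteratedDeriv 3 f z₀ = w} =
        closedBall c
          (6 * (1 - ‖γ₀‖ ^ 2) * (1 - ‖γ₁‖ ^ 2) * (1 - ‖γ₂‖ ^ 2) /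
            (1 - ‖z₀‖ ^ 2) ^ 3) := by
  refine ⟨thirdDerivCenter z₀ γ₀ γ₁ γ₂, ?_⟩
  change _ = closedBall _ (thirdDerivRadius z₀ γ₀ γ₁ γ₂)
  rw [← affinity_unitClosedBall (thirdDerivRadius_nonneg hz₀ hγ₀ hγ₁ hγ₂)]
  ext w
  constructor
  · rintro ⟨f, hf, rfl, rfl, rfl, rfl⟩
    obtain ⟨κ, hκ, heq⟩ := hf.exists_iteratedDeriv_three_eq hz₀ hγ₁ hγ₂
    exact ⟨_, ⟨κ, hκ, rfl⟩, heq.symm⟩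
  · rintro ⟨_, ⟨κ, hκ, rfl⟩, rfl⟩
    exact exists_hclass_iteratedDeriv_three_eq hz₀ hγ₀ hγ₁ hγ₂ hκ
end
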